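/- Let (T, C) be a tensor network consisting of J ≥ 2 tensors t¹, …, t^J (each t^j an array in ℂ^{n₁^j × ⋯ × n_{K^j}^j}) together with a contraction C specified by disjoint pairs of index pointers of matching dimensions, such that no pair contracts two indices belonging to the same tensor (no self-contractions). Then the contracted tensor satisfies ‖C(t¹ ⊗ t² ⊗ ⋯ ⊗ t^J)‖_F ≤ ∏_{j=1}^J ‖t^j‖_F. -/

import Mathlib

/-!
The bound is repeated Cauchy–Schwarz, one contracted pair at a time.

Everything is done on configurations `x` assigning a value to every index.  Put
`f j x = ‖t j (x restricted to the indices of t j)‖`, and let `A` be the set of contracted indices.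
For fixed values of the free indices, summing out a single contracted pair `(a, b)` involves only
the factors of the two distinct tensors owning `a` and `b`, and
`∑ v, g v * h v ≤ √(∑ v, g v ^ 2) * √(∑ w, h w ^ 2)` decouples them.  Induction on the number of
contracted indices (`marg_pair_le`) bounds the modulus of the contracted entry by
`∏ j, √(∑ (f j) ^ 2)`, where the `j`-th sum runs over the contracted indices of `t j` only, the
free ones being kept fixed.  After squaring, the factors have disjoint sets of variables, so the
product of the sums is the sum of the products (`prod_marg`), and summing over the free indices
gives `∑ x, ∏ j, f j x ^ 2 = ∏ j, ‖t j‖_F ^ 2`.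
-/

noncomputable section

namespace TN

/-- Frobenius norm of a tensor: the `ℓ₂`-norm of the vector of all of its entries. -/
def tFrob {ι : Type*} [Fintype ι] (f : ι → ℂ) : ℝ := Real.sqrt (∑ i, ‖f i‖ ^ 2)

open scoped Classical in
/-- The contraction of a tensor `t` with `K` indices of dimensions `dims k`, specified
by a pairing `pair` of index pointers (`pair k = some k'` means that index `k` is
contracted with index `k'`; `pair k = none` means that index `k` is free).  Each
contracted pair of indices is summed over its common range (the two indices being set
equal) and the free indices remain. -/
def contractTensor {K : ℕ} (dims : Fin K → ℕ) (pair : Fin K → Option (Fin K))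
    (t : (∀ k : Fin K, Fin (dims k)) → ℂ) :
    ((∀ k : {k : Fin K // pair k = none}, Fin (dims k.1)) → ℂ) :=
  fun y => ∑ x : ∀ k : Fin K, Fin (dims k),
    if (∀ (k : Fin K) (h : pair k = none), x k = y ⟨k, h⟩) ∧
        (∀ k k' : Fin K, pair k = some k' → ((x k : ℕ) = (x k' : ℕ)))
      then t x else 0

section Helpers

variable {K J : ℕ} {dims : Fin K → ℕ}

open scoped Classical in
/-- Partial sum of `f` over the coordinates in `A`, the coordinates outside `A` being fixed to
those of `x`.  It is encoded as a sum over the full configurations agreeing with `x` off `A`. -/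
def marg (A : Finset (Fin K)) (f : (∀ k, Fin (dims k)) → ℝ) (x : ∀ k, Fin (dims k)) : ℝ :=
  ∑ z : ∀ k, Fin (dims k), if ∀ k, k ∉ A → z k = x k then f z else 0

open scoped Classical in
/-- Indicator of the configurations satisfying all the contraction constraints at the indices
in `A`. -/
def ind (pair : Fin K → Option (Fin K)) (A : Finset (Fin K)) (x : ∀ k, Fin (dims k)) : ℝ :=
  if ∀ k ∈ A, ∀ k', pair k = some k' → (x k : ℕ) = (x k' : ℕ) then 1 else 0

/-- `f` depends only on the coordinates in `S`. -/
def DepOn (S : Set (Fin K)) (f : (∀ k, Fin (dims k)) → ℝ) : Prop :=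
  ∀ x x' : ∀ k, Fin (dims k), (∀ k ∈ S, x k = x' k) → f x = f x'

lemma marg_empty (f : (∀ k, Fin (dims k)) → ℝ) (x : ∀ k, Fin (dims k)) :
    marg ∅ f x = f x := by
  classical
  unfold marg
  have : ∀ z : ∀ k, Fin (dims k), (∀ k, k ∉ (∅ : Finset (Fin K)) → z k = x k) ↔ z = x := by
    intro z
    simp [funext_iff]
  simp only [this]
  simp

lemma marg_insert {A : Finset (Fin K)} {a : Fin K} (ha : a ∉ A)
    (f : (∀ k, Fin (dims k)) → ℝ) (x : ∀ k, Fin (dims k)) :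
    marg (insert a A) f x = ∑ v, marg A f (Function.update x a v) := by
  classical
  unfold marg
  rw [Finset.sum_comm]
  refine Finset.sum_congr rfl fun z _ => ?_
  have key : ∀ v, (∀ k, k ∉ A → z k = Function.update x a v k) ↔
      (z a = v ∧ ∀ k, k ∉ insert a A → z k = x k) := by
    intro v
    constructor
    · intro h
      refine ⟨by simpa using h a ha, fun k hk => ?_⟩
      rw [Finset.mem_insert, not_or] at hk
      simpa [Function.update_of_ne hk.1] using h k hk.2
    · rintro ⟨h1, h2⟩ k hk
      by_cases hka : k = a
      · subst hka
        simpa using h1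
      · rw [Function.update_of_ne hka]
        exact h2 k (by simp [hka, hk])
  simp only [key, ite_and]
  simp

lemma marg_nonneg (A : Finset (Fin K)) {f : (∀ k, Fin (dims k)) → ℝ} (hf : ∀ x, 0 ≤ f x)
    (x : ∀ k, Fin (dims k)) : 0 ≤ marg A f x := by
  classical
  unfold marg
  refine Finset.sum_nonneg fun z _ => ?_
  split_ifs
  · exact hf z
  · exact le_rfl

lemma marg_dep (S : Set (Fin K)) {f : (∀ k, Fin (dims k)) → ℝ} (hf : DepOn S f)
    (A : Finset (Fin K)) : DepOn S (marg A f) := by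
  classical
  induction A using Finset.induction_on with
  | empty =>
    intro x x' h
    rw [marg_empty, marg_empty]
    exact hf x x' h
  | insert a A ha ih =>
    intro x x' h
    rw [marg_insert ha, marg_insert ha]
    refine Finset.sum_congr rfl fun v _ => ih _ _ fun k hk => ?_
    by_cases hka : k = a
    · subst hka
      simp
    · simp [Function.update_of_ne hka, h k hk]

lemma marg_update_of_notMem {S : Set (Fin K)} {f : (∀ k, Fin (dims k)) → ℝ} (hf : DepOn S f)
    (A : Finset (Fin K)) {a : Fin K} (ha : a ∉ S) (x : ∀ k, Fin (dims k)) (v : Fin (dims a)) :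
    marg A f (Function.update x a v) = marg A f x := by
  refine marg_dep S hf A _ _ fun k hk => ?_
  rw [Function.update_of_ne]
  rintro rfl
  exact ha hk

/-- Fubini for factors with disjoint sets of variables. -/
lemma prod_marg (owner : Fin K → Fin J) (f : Fin J → (∀ k, Fin (dims k)) → ℝ)
    (hf : ∀ j, DepOn {k | owner k = j} (f j)) (A : Finset (Fin K)) (x : ∀ k, Fin (dims k)) :
    ∏ j, marg (A.filter fun k => owner k = j) (f j) x = marg A (fun x => ∏ j, f j x) x := by
  classical
  induction A using Finset.induction_on generalizing x with
  | empty => simp [marg_empty]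
  | insert a A ha ih =>
    rw [marg_insert ha]
    simp only [← ih]
    have hne : ∀ j ∈ Finset.univ.erase (owner a), owner a ≠ j := fun j hj =>
      (Finset.ne_of_mem_erase hj).symm
    rw [← Finset.mul_prod_erase _ _ (Finset.mem_univ (owner a)), Finset.filter_insert,
      if_pos rfl, marg_insert (by simp [ha]), Finset.sum_mul]
    refine Finset.sum_congr rfl fun v _ => ?_
    rw [← Finset.mul_prod_erase _ _ (Finset.mem_univ (owner a))]
    congr 1
    refine Finset.prod_congr rfl fun j hj => ?_
    rw [Finset.filter_insert, if_neg (hne j hj),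
      marg_update_of_notMem (hf j) _ (by simpa using hne j hj)]

/-- Cauchy–Schwarz along the diagonal of a product of two index ranges.  If the ranges have
different lengths, the diagonal is that of the shorter one. -/
lemma sum_diag_le {n m : ℕ} (g : Fin n → ℝ) (h : Fin m → ℝ) :
    ∑ v : Fin n, ∑ w : Fin m, (if (v : ℕ) = (w : ℕ) then g v * h w else 0) ≤
      √(∑ v, g v ^ 2) * √(∑ w, h w ^ 2) := by
  classical
  -- On the set of diagonal pairs, each coordinate projection is injective.
  set D : Finset (Fin n × Fin m) := Finset.univ.filter fun p => (p.1 : ℕ) = (p.2 : ℕ) with hD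
  have h0 : ∑ v : Fin n, ∑ w : Fin m, (if (v : ℕ) = (w : ℕ) then g v * h w else 0) =
      ∑ p ∈ D, g p.1 * h p.2 := by
    rw [hD, Finset.sum_filter, Fintype.sum_prod_type]
  have h1 : ∑ p ∈ D, g p.1 ^ 2 ≤ ∑ v, g v ^ 2 := by
    rw [← Finset.sum_image (f := fun v => g v ^ 2) (g := Prod.fst) (s := D)]
    · exact Finset.sum_le_sum_of_subset_of_nonneg (Finset.subset_univ _)
        fun _ _ _ => sq_nonneg _
    · rintro ⟨p1, p2⟩ hp ⟨q1, q2⟩ hq hpq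
      simp [hD] at hp hq hpq ⊢
      omega
  have h2 : ∑ p ∈ D, h p.2 ^ 2 ≤ ∑ w, h w ^ 2 := by
    rw [← Finset.sum_image (f := fun v => h v ^ 2) (g := Prod.snd) (s := D)]
    · exact Finset.sum_le_sum_of_subset_of_nonneg (Finset.subset_univ _)
        fun _ _ _ => sq_nonneg _
    · rintro ⟨p1, p2⟩ hp ⟨q1, q2⟩ hq hpq
      simp [hD] at hp hq hpq ⊢
      omega
  rw [h0]
  refine (Real.sum_mul_le_sqrt_mul_sqrt D (fun p => g p.1) (fun p => h p.2)).trans ?_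
  gcongr

/-- Splitting off one pair `(a, b)` of summed indices from the constrained sum. -/
lemma marg_ind_insert_le {pair : Fin K → Option (Fin K)} {A : Finset (Fin K)} {a b : Fin K}
    (hab : pair a = some b) (hne : a ≠ b) (ha : a ∉ A) (hb : b ∉ A)
    {F : (∀ k, Fin (dims k)) → ℝ} (hF : ∀ x, 0 ≤ F x) (x : ∀ k, Fin (dims k)) :
    marg (insert a (insert b A)) (fun z => ind pair (insert a (insert b A)) z * F z) x ≤
      ∑ v : Fin (dims a), ∑ w : Fin (dims b), if (v : ℕ) = (w : ℕ) then
        marg A (fun z => ind pair A z * F z) (Function.update (Function.update x a v) b w)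
      else 0 := by
  classical
  rw [marg_insert (by simp [ha, hne])]
  refine Finset.sum_le_sum fun v _ => ?_
  rw [marg_insert hb]
  refine Finset.sum_le_sum fun w _ => ?_
  set x' := Function.update (Function.update x a v) b w with hx'
  have hxa : x' a = v := by simp [hx', Function.update_of_ne hne]
  have hxb : x' b = w := by simp [hx']
  split_ifs with hvw
  · unfold marg
    refine Finset.sum_le_sum fun z _ => ?_
    split_ifs
    · refine mul_le_mul_of_nonneg_right ?_ (hF z)
      unfold ind
      split_ifs with h1 h2 h2
      · exact le_rfl
      · exact absurd (fun k hk => h1 k (by simp [hk])) h2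
      · exact zero_le_one
      · exact le_rfl
    · exact le_rfl
  · unfold marg
    refine (Finset.sum_eq_zero fun z _ => ?_).le
    split_ifs with hz
    · have : ind pair (insert a (insert b A)) z = 0 := by
        unfold ind
        refine if_neg fun h => hvw ?_
        have := h a (by simp) b hab
        rwa [hz a ha, hz b hb, hxa, hxb] at this
      simp only [this, zero_mul]
    · rfl

/-- Iterated Cauchy–Schwarz: the sum over a set `A` of indices that is closed under the pairing,
restricted by the contraction constraints, is bounded by the product of the `ℓ₂`-norms of the
factors in their own indices from `A`. -/
lemma marg_pair_le (owner : Fin K → Fin J) (pair : Fin K → Option (Fin K))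
    (hsymm : ∀ k k' : Fin K, pair k = some k' → pair k' = some k)
    (hnoself : ∀ k k' : Fin K, pair k = some k' → owner k ≠ owner k')
    (f : Fin J → (∀ k, Fin (dims k)) → ℝ) (hf0 : ∀ j x, 0 ≤ f j x)
    (hf : ∀ j, DepOn {k | owner k = j} (f j)) (n : ℕ) :
    ∀ A : Finset (Fin K), A.card ≤ n → (∀ k ∈ A, ∃ k' ∈ A, pair k = some k') →
      ∀ x, marg A (fun z => ind pair A z * ∏ j, f j z) x ≤
        ∏ j, √(marg (A.filter fun k => owner k = j) (fun z => f j z ^ 2) x) := by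
  classical
  have base : ∀ x, marg ∅ (fun z => ind pair ∅ z * ∏ j, f j z) x ≤
      ∏ j, √(marg ((∅ : Finset (Fin K)).filter fun k => owner k = j)
        (fun z => f j z ^ 2) x) := by
    intro x
    simp [marg_empty, ind, Real.sqrt_sq (hf0 _ _)]
  induction n with
  | zero =>
    intro A hA _ x
    obtain rfl : A = ∅ := by simpa using hA
    exact base x
  | succ n ih =>
    intro A hA hcl x
    rcases A.eq_empty_or_nonempty with rfl | ⟨a, haA⟩
    · exact base x
    obtain ⟨b, hbA, hab⟩ := hcl a haA
    have hown := hnoself a b hab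
    have hne : a ≠ b := fun h => hown (by rw [h])
    set B := (A.erase a).erase b with hB
    have haB : a ∉ B := by simp [hB]
    have hbB : b ∉ B := by simp [hB]
    have hAB : A = insert a (insert b B) := by
      rw [hB, Finset.insert_erase (by simp [hbA, hne.symm]), Finset.insert_erase haA]
    have hBcard : B.card ≤ n := by
      have : A.card = B.card + 2 := by
        rw [hAB, Finset.card_insert_of_notMem (by simp [haB, hne]),
          Finset.card_insert_of_notMem hbB]
      omega
    have hBcl : ∀ k ∈ B, ∃ k' ∈ B, pair k = some k' := by
      intro k hk
      have hk' : k ≠ b ∧ k ≠ a ∧ k ∈ A := by simpa [hB] using hk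
      obtain ⟨k', hk'A, hkk'⟩ := hcl k hk'.2.2
      refine ⟨k', ?_, hkk'⟩
      have h1 : k' ≠ a := by
        rintro rfl
        have := hsymm _ _ hkk'
        rw [hab] at this
        exact hk'.1 (Option.some.inj this).symm
      have h2 : k' ≠ b := by
        rintro rfl
        have h3 := hsymm _ _ hkk'
        rw [hsymm _ _ hab] at h3
        exact hk'.2.1 (Option.some.inj h3).symm
      simp [hB, h1, h2, hk'A]
    have hIH := ih B hBcard hBcl
    clear_value B
    subst hAB
    set G : Fin J → (∀ k, Fin (dims k)) → ℝ :=
      fun j y => √(marg (B.filter fun k => owner k = j) (fun z => f j z ^ 2) y) with hG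
    have hf2 : ∀ j, DepOn {k | owner k = j} (fun z => f j z ^ 2) := fun j y y' h => by
      simp only [hf j y y' h]
    have hGup : ∀ (j) (c : Fin K) (y : ∀ k, Fin (dims k)) (v), owner c ≠ j →
        G j (Function.update y c v) = G j y := by
      intro j c y v hc
      simp only [hG]
      rw [marg_update_of_notMem (hf2 j) _ (by simpa using hc)]
    have hGsq : ∀ j y, G j y ^ 2 = marg (B.filter fun k => owner k = j)
        (fun z => f j z ^ 2) y := fun j y =>
      Real.sq_sqrt (marg_nonneg _ (fun _ => sq_nonneg _) _)
    have hsplit : ∀ g : Fin J → ℝ, ∏ j, g j =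
        (g (owner a) * g (owner b)) * ∏ j ∈ (Finset.univ.erase (owner a)).erase (owner b), g j := by
      intro g
      rw [mul_assoc, Finset.mul_prod_erase _ _ (by simp [hown.symm]),
        Finset.mul_prod_erase _ _ (by simp)]
    set R := ∏ j ∈ (Finset.univ.erase (owner a)).erase (owner b), G j x with hR
    have hR0 : 0 ≤ R := Finset.prod_nonneg fun _ _ => Real.sqrt_nonneg _
    have hprod : ∀ v w, ∏ j, G j (Function.update (Function.update x a v) b w) =
        (G (owner a) (Function.update x a v) * G (owner b) (Function.update x b w)) * R := by
      intro v w
      rw [hsplit, hGup (owner a) b _ _ hown.symm, Function.update_comm hne,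
        hGup (owner b) a _ _ hown]
      congr 1
      refine Finset.prod_congr rfl fun j hj => ?_
      simp only [Finset.mem_erase, Finset.mem_univ, and_true] at hj
      rw [hGup j a _ _ (Ne.symm hj.2), hGup j b _ _ (Ne.symm hj.1)]
    calc _ ≤ _ := marg_ind_insert_le hab hne haB hbB
            (fun z => Finset.prod_nonneg fun j _ => hf0 j z) x
      _ ≤ ∑ v : Fin (dims a), ∑ w : Fin (dims b), (if (v : ℕ) = (w : ℕ) then
            G (owner a) (Function.update x a v) * G (owner b) (Function.update x b w)
            else 0) * R := by
          refine Finset.sum_le_sum fun v _ => Finset.sum_le_sum fun w _ => ?_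
          split_ifs
          · rw [← hprod]
            exact hIH _
          · simp
      _ = (∑ v : Fin (dims a), ∑ w : Fin (dims b), if (v : ℕ) = (w : ℕ) then
            G (owner a) (Function.update x a v) * G (owner b) (Function.update x b w)
            else 0) * R := by
          simp only [Finset.sum_mul]
      _ ≤ (√(∑ v, G (owner a) (Function.update x a v) ^ 2) *
            √(∑ w, G (owner b) (Function.update x b w) ^ 2)) * R :=
          mul_le_mul_of_nonneg_right (sum_diag_le _ _) hR0
      _ = _ := by
          rw [hsplit]
          simp only [hGsq]
          congr 1
          · rw [← marg_insert (by simp [haB]), ← marg_insert (by simp [hbB])]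
            simp [Finset.filter_insert, hown, hown.symm]
          · refine Finset.prod_congr rfl fun j hj => ?_
            simp only [Finset.mem_erase, Finset.mem_univ, and_true] at hj
            simp [hG, Finset.filter_insert, Ne.symm hj.1, Ne.symm hj.2]

lemma sum_prod_owner (owner : Fin K → Fin J)
    (g : ∀ j : Fin J, ((∀ k : {k : Fin K // owner k = j}, Fin (dims k.1)) → ℝ)) :
    ∑ x : ∀ k, Fin (dims k), ∏ j, g j (fun k => x k.1) = ∏ j, ∑ u, g j u := by
  classical
  rw [Finset.prod_univ_sum, Fintype.piFinset_univ]
  refine Fintype.sum_bijective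
    (fun (x : ∀ k, Fin (dims k)) (j : Fin J) (k : {k : Fin K // owner k = j}) => x k.1)
    ⟨?_, ?_⟩ _ _ fun x => rfl
  · intro x x' h
    funext k
    exact congrFun (congrFun h (owner k)) ⟨k, rfl⟩
  · intro u
    refine ⟨fun k => u (owner k) ⟨k, rfl⟩, ?_⟩
    funext j ⟨k, hk⟩
    subst hk
    rfl

end Helpers

/-- Proposition 20: bound on tensor network contractions.  Let
`(T, C)` be a tensor network consisting of `J ≥ 2` tensors `t j` (the ownership of the
global index pointers `k : Fin K` being recorded by `owner : Fin K → Fin J`) together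
with a contraction given by a pairing `pair` of disjoint pairs of index pointers of
matching dimensions, such that no pair contracts two indices of the same tensor.  Then
`‖C(t¹ ⊗ ⋯ ⊗ t^J)‖_F ≤ ∏ j ‖t^j‖_F`. -/
theorem tensor_network_bound (K J : ℕ) (hJ : 2 ≤ J)
    (dims : Fin K → ℕ) (owner : Fin K → Fin J) (pair : Fin K → Option (Fin K))
    (hsymm : ∀ k k' : Fin K, pair k = some k' → pair k' = some k)
    (hne : ∀ k k' : Fin K, pair k = some k' → k ≠ k')
    (hdims : ∀ k k' : Fin K, pair k = some k' → dims k = dims k')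
    (hnoself : ∀ k k' : Fin K, pair k = some k' → owner k ≠ owner k')
    (t : ∀ j : Fin J, ((∀ k : {k : Fin K // owner k = j}, Fin (dims k.1)) → ℂ)) :
    tFrob (contractTensor dims pair (fun x => ∏ j, t j (fun k => x k.1))) ≤
      ∏ j, tFrob (t j) := by
  classical
  have hR0 : 0 ≤ ∏ j, tFrob (t j) := Finset.prod_nonneg fun _ _ => Real.sqrt_nonneg _
  refine Real.sqrt_le_iff.mpr ⟨hR0, ?_⟩
  rcases isEmpty_or_nonempty (∀ k, Fin (dims k)) with hemp | ⟨⟨xs⟩⟩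
  · -- Some dimension is zero, so every entry of the contraction is an empty sum.
    have : ∀ y, contractTensor dims pair (fun x => ∏ j, t j (fun k => x k.1)) y = 0 := fun y => by
      unfold contractTensor
      exact Fintype.sum_empty _
    simp only [this]
    simpa using sq_nonneg _
  set f : Fin J → (∀ k, Fin (dims k)) → ℝ := fun j x => ‖t j (fun k => x k.1)‖ with hfdef
  have hf0 : ∀ j x, 0 ≤ f j x := fun _ _ => norm_nonneg _
  have hf : ∀ j, DepOn {k | owner k = j} (f j) := by
    intro j x x' h
    simp only [hfdef]
    congr 2
    funext k
    exact h k.1 k.2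
  have hf2 : ∀ j, DepOn {k | owner k = j} (fun z => f j z ^ 2) := fun j y y' h => by
    simp only [hf j y y' h]
  set A : Finset (Fin K) := Finset.univ.filter fun k => pair k ≠ none with hA
  have hmem : ∀ k, k ∉ A ↔ pair k = none := fun k => by simp [hA]
  have hcl : ∀ k ∈ A, ∃ k' ∈ A, pair k = some k' := by
    intro k hk
    obtain ⟨l, hkl⟩ := Option.ne_none_iff_exists'.mp (Finset.mem_filter.mp hk).2
    exact ⟨l, by simp [hA, hsymm _ _ hkl], hkl⟩
  -- The configuration with free part `y`; its contracted coordinates are irrelevant.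
  let x0 : (∀ k : {k : Fin K // pair k = none}, Fin (dims k.1)) → ∀ k, Fin (dims k) :=
    fun y k => if h : pair k = none then y ⟨k, h⟩ else xs k
  have hx0 : ∀ y k (h : pair k = none), x0 y k = y ⟨k, h⟩ := fun y k h => by simp [x0, h]
  have hentry : ∀ y, ‖contractTensor dims pair (fun x => ∏ j, t j (fun k => x k.1)) y‖ ^ 2 ≤
      marg A (fun z => ∏ j, f j z ^ 2) (x0 y) := by
    intro y
    have h1 : ‖contractTensor dims pair (fun x => ∏ j, t j (fun k => x k.1)) y‖ ≤
        marg A (fun z => ind pair A z * ∏ j, f j z) (x0 y) := by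
      unfold contractTensor marg
      refine (norm_sum_le _ _).trans (Finset.sum_le_sum fun z _ => ?_)
      split_ifs with h h' h'
      · have : ind pair A z = 1 := if_pos fun k _ k' hk => h.2 k k' hk
        simp only [this, one_mul, norm_prod, hfdef, le_refl]
      · exact absurd (fun k hk => by
          rw [hx0 y k ((hmem k).1 hk)]
          exact h.1 k ((hmem k).1 hk)) h'
      · rw [norm_zero]
        refine mul_nonneg ?_ (Finset.prod_nonneg fun j _ => hf0 j z)
        unfold ind
        split_ifs <;> norm_num
      · simp
    have h2 := h1.trans
      (marg_pair_le owner pair hsymm hnoself f hf0 hf A.card A le_rfl hcl (x0 y))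
    refine (pow_le_pow_left₀ (norm_nonneg _) h2 2).trans (le_of_eq ?_)
    rw [← Finset.prod_pow, ← prod_marg owner (fun j z => f j z ^ 2) hf2]
    exact Finset.prod_congr rfl fun j _ =>
      Real.sq_sqrt (marg_nonneg _ (fun _ => sq_nonneg _) _)
  refine (Finset.sum_le_sum fun y _ => hentry y).trans (le_of_eq ?_)
  have htotal : ∑ y, marg A (fun z => ∏ j, f j z ^ 2) (x0 y) = ∑ x, ∏ j, f j x ^ 2 := by
    unfold marg
    rw [Finset.sum_comm]
    refine Finset.sum_congr rfl fun z _ => ?_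
    have : ∀ y, (∀ k, k ∉ A → z k = x0 y k) ↔
        (fun k : {k : Fin K // pair k = none} => z k.1) = y := by
      intro y
      constructor
      · intro h
        funext k
        rw [h k.1 ((hmem _).2 k.2), hx0 y k.1 k.2]
      · rintro rfl k hk
        exact (hx0 (fun k => z k.1) k ((hmem k).1 hk)).symm
    simp only [this]
    simp
  rw [htotal, ← Finset.prod_pow]
  have := sum_prod_owner (dims := dims) owner (fun j u => ‖t j u‖ ^ 2)
  rw [this]
  refine Finset.prod_congr rfl fun j _ => ?_
  unfold tFrob
  rw [Real.sq_sqrt (Finset.sum_nonneg fun _ _ => sq_nonneg _)]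


end TN
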